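/- Let $M$ be a vector space over a field of characteristic zero equipped with a bilinear bracket $[\cdot,\cdot]$ satisfying $[x,x]=0$ for all $x$ and the Mal'tsev identity $[[x,y],[x,z]] = [[[x,y],z],x] + [[[y,z],x],x] + [[[z,x],x],y]$ for all $x,y,z$. Define the Loos bracket by $\{x,y,z\} := [x,[y,z]] - [y,[x,z]] + 2[[x,y],z]$. Then the Loos bracket satisfies the derivation identity $\{x,y,\{z,w,v\}\} = \{\{x,y,z\},w,v\} + \{z,\{x,y,w\},v\} + \{z,w,\{x,y,v\}\}$ for all $x,y,z,w,v \in M$. -/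

import Mathlib

/-!
Write `L x = [x, ·]` and `D x y = [L x, L y] + L [x,y]`, so that `{x,y,·} = D x y + L [x,y]`.
Polarizing the Mal'tsev identity gives Sagle's identity, which in operator form reads
`L [a,c] L b + L a L [b,c] = L [[a,b],c] + L b L a L c - L c L b L a`. Summed cyclically, the cubic
words cancel and leave `D a [x,y] = D [a,x] y + D x [a,y]`; antisymmetrized, it then says that
`D x y` is a derivation of the bracket, hence of the Loos bracket. These two facts make every `L a`
a derivation of the Loos bracket too, and therefore so is `{x,y,·}`.
-/

attribute [local instance] LieRing.ofAssociativeRing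

section LoosBracket

variable {R M : Type*} [CommRing R] [AddCommGroup M] [Module R M]

/-- Derivations of the bilinear product `B`, encoded by a commutator with the left multiplications
`B x`; evaluated at `y` this is the Leibniz rule `E (B x y) - B x (E y) = B (E x) y`. -/
def IsBilinDerivation (B : M →ₗ[R] Module.End R M) (E : Module.End R M) : Prop :=
  ∀ x, ⁅E, B x⁆ = B (E x)

/-- Derivations of the triple product `(x, y, z) ↦ T x y z`, with the Leibniz rule in `z` encoded
by a commutator as in `IsBilinDerivation`. -/
def IsTripleDerivation (T : M →ₗ[R] M →ₗ[R] Module.End R M) (E : Module.End R M) : Prop :=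
  ∀ x y, ⁅E, T x y⁆ = T (E x) y + T x (E y)

theorem IsBilinDerivation.apply {B : M →ₗ[R] Module.End R M} {E : Module.End R M}
    (hE : IsBilinDerivation B E) (x y : M) : E (B x y) = B (E x) y + B x (E y) := by
  rw [← hE x, Ring.lie_def, LinearMap.sub_apply, Module.End.mul_apply, Module.End.mul_apply,
    sub_add_cancel]

theorem IsTripleDerivation.apply {T : M →ₗ[R] M →ₗ[R] Module.End R M} {E : Module.End R M}
    (hE : IsTripleDerivation T E) (x y z : M) :
    E (T x y z) = T (E x) y z + T x (E y) z + T x y (E z) := by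
  rw [← LinearMap.add_apply, ← hE x y, Ring.lie_def, LinearMap.sub_apply, Module.End.mul_apply,
    Module.End.mul_apply, sub_add_cancel]

theorem IsTripleDerivation.add {T : M →ₗ[R] M →ₗ[R] Module.End R M} {E F : Module.End R M}
    (hE : IsTripleDerivation T E) (hF : IsTripleDerivation T F) :
    IsTripleDerivation T (E + F) := by
  intro x y
  simp only [add_lie, hE x y, hF x y, LinearMap.add_apply, map_add]
  abel

/-- The operator `D x y = [L x, L y] + L [x,y]` of an algebra with bracket `B`, where `L = B`; in a
Mal'tsev algebra it is an inner derivation. -/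
def innerDerivation (B : M →ₗ[R] Module.End R M) : M →ₗ[R] M →ₗ[R] Module.End R M :=
  LinearMap.mk₂ R (fun x y ↦ ⁅B x, B y⁆ + B (B x y))
    (fun x x' y ↦ by simp only [map_add, LinearMap.add_apply, add_lie]; abel)
    (fun c x y ↦ by simp only [map_smul, LinearMap.smul_apply, smul_lie, smul_add])
    (fun x y y' ↦ by simp only [map_add, lie_add]; abel)
    (fun c x y ↦ by simp only [map_smul, lie_smul, smul_add])

/-- The Loos bracket `{x,y,z} = [x,[y,z]] - [y,[x,z]] + 2[[x,y],z]`, as an operator on `z`. -/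
def loosBracket (B : M →ₗ[R] Module.End R M) : M →ₗ[R] M →ₗ[R] Module.End R M :=
  innerDerivation B + B.compr₂ B

theorem innerDerivation_apply (B : M →ₗ[R] Module.End R M) (x y : M) :
    innerDerivation B x y = ⁅B x, B y⁆ + B (B x y) :=
  rfl

theorem loosBracket_eq_add (B : M →ₗ[R] Module.End R M) (x y : M) :
    loosBracket B x y = innerDerivation B x y + B (B x y) :=
  rfl

theorem loosBracket_apply (B : M →ₗ[R] Module.End R M) (x y z : M) :
    loosBracket B x y z = B x (B y z) - B y (B x z) + 2 • B (B x y) z := by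
  simp only [loosBracket_eq_add, innerDerivation_apply, Ring.lie_def, LinearMap.add_apply,
    LinearMap.sub_apply, Module.End.mul_apply]
  abel

theorem IsBilinDerivation.isTripleDerivation_innerDerivation {B : M →ₗ[R] Module.End R M}
    {E : Module.End R M} (hE : IsBilinDerivation B E) :
    IsTripleDerivation (innerDerivation B) E := by
  intro x y
  simp only [innerDerivation_apply, lie_add, leibniz_lie E, hE _, hE.apply, map_add]
  abel

theorem IsBilinDerivation.isTripleDerivation_loosBracket {B : M →ₗ[R] Module.End R M}
    {E : Module.End R M} (hE : IsBilinDerivation B E) :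
    IsTripleDerivation (loosBracket B) E := by
  intro x y
  simp only [loosBracket_eq_add, lie_add, hE.isTripleDerivation_innerDerivation x y, hE _,
    hE.apply, map_add]
  abel

end LoosBracket

/-- The bilinear bracket `B` makes `M` a Mal'tsev algebra; `B` is a linear map into the
endomorphisms because its left multiplications `B x` are composed throughout. -/
structure IsMaltsev {R M : Type*} [CommRing R] [AddCommGroup M] [Module R M]
    (B : M →ₗ[R] Module.End R M) : Prop where
  self_eq_zero (x : M) : B x x = 0
  maltsev (x y z : M) :
    B (B x y) (B x z) = B (B (B x y) z) x + B (B (B y z) x) x + B (B (B z x) x) y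

namespace IsMaltsev

variable {R M : Type*} [CommRing R] [AddCommGroup M] [Module R M] {B : M →ₗ[R] Module.End R M}

theorem skew (hB : IsMaltsev B) (x y : M) : B x y = -B y x :=
  (LinearMap.IsAlt.neg (B := B) hB.self_eq_zero y x).symm

theorem maltsev_polarized (hB : IsMaltsev B) (x t y z : M) :
    B (B x y) (B t z) + B (B t y) (B x z) =
      B (B (B x y) z) t + B (B (B y z) x) t + B (B (B z x) t) y +
        (B (B (B t y) z) x + B (B (B y z) t) x + B (B (B z t) x) y) := by
  have h := hB.maltsev (x + t) y z
  simp only [map_add, LinearMap.add_apply] at h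
  linear_combination (norm := module) h - hB.maltsev x y z - hB.maltsev t y z

theorem sagle_identity (hB : IsMaltsev B) (h2 : IsSMulRegular M (2 : ℕ)) (a b c d : M) :
    B (B a c) (B b d) =
      B (B (B a b) c) d + B (B (B b c) d) a + B (B (B c d) a) b + B (B (B d a) b) c := by
  apply h2
  -- `hab` and `had` each contain `[[a,c],[b,d]]`; their other products of brackets sum to those
  -- of `hac`.
  have hab := hB.maltsev_polarized b a c d
  have had := hB.maltsev_polarized d a b c
  have hac := hB.maltsev_polarized c a d b
  simp only [hB.skew b a, hB.skew c a, hB.skew d a, hB.skew c b, hB.skew d b, hB.skew d c,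
    hB.skew (B b c) (B a d), hB.skew (B b d) (B a c), hB.skew (B c d) (B a b),
    map_neg, LinearMap.neg_apply, neg_neg] at hab had hac ⊢
  linear_combination (norm := module) hab + had - hac

theorem sagle_operator_identity (hB : IsMaltsev B) (h2 : IsSMulRegular M (2 : ℕ)) (a b c : M) :
    B (B a c) * B b + B a * B (B b c) =
      B (B (B a b) c) + B b * B a * B c - B c * B b * B a := by
  ext d
  have hbcd : B (B (B b c) d) a = -B a (B (B b c) d) := hB.skew _ _
  have hcda : B (B (B c d) a) b = B b (B a (B c d)) := by
    rw [hB.skew _ b, hB.skew _ a, map_neg, neg_neg]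
  have hdab : B (B (B d a) b) c = -B c (B b (B a d)) := by
    rw [hB.skew _ c, hB.skew _ b, hB.skew d a, map_neg, map_neg, map_neg, neg_neg]
  simp only [LinearMap.add_apply, LinearMap.sub_apply, Module.End.mul_apply]
  rw [hB.sagle_identity h2, hbcd, hcda, hdab]
  abel

theorem innerDerivation_bracket (hB : IsMaltsev B) (h2 : IsSMulRegular M (2 : ℕ)) (a x y : M) :
    innerDerivation B a (B x y) = innerDerivation B (B a x) y + innerDerivation B x (B a y) := by
  have haxy := hB.sagle_operator_identity h2 a x y
  have hxya := hB.sagle_operator_identity h2 x y a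
  have hyax := hB.sagle_operator_identity h2 y a x
  simp only [innerDerivation_apply, Ring.lie_def]
  simp only [hB.skew x a, hB.skew y a, hB.skew y x, hB.skew a (B x y), hB.skew x (B a y), map_neg,
    LinearMap.neg_apply, neg_mul, mul_neg] at haxy hxya hyax ⊢
  linear_combination (norm := noncomm_ring) haxy + hxya + hyax

theorem isBilinDerivation_innerDerivation (hB : IsMaltsev B) (h2 : IsSMulRegular M (2 : ℕ))
    (x y : M) : IsBilinDerivation B (innerDerivation B x y) := by
  intro z
  have hxyz := hB.sagle_operator_identity h2 x y z
  have hyxz := hB.sagle_operator_identity h2 y x z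
  have hcyclic := hB.innerDerivation_bracket h2 z x y
  simp only [innerDerivation_apply, Ring.lie_def, LinearMap.add_apply, LinearMap.sub_apply,
    Module.End.mul_apply, map_add, map_sub] at hcyclic ⊢
  simp only [hB.skew z x, hB.skew z y, hB.skew y x, hB.skew z (B x y), hB.skew (B x z) y, map_neg,
    LinearMap.neg_apply, neg_mul, mul_neg] at hxyz hyxz hcyclic ⊢
  linear_combination (norm := noncomm_ring) hxyz - hyxz - hcyclic

theorem isTripleDerivation_left (hB : IsMaltsev B) (h2 : IsSMulRegular M (2 : ℕ)) (a : M) :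
    IsTripleDerivation (loosBracket B) (B a) := by
  intro x y
  have hD : ⁅B a, innerDerivation B x y⁆ = -B (innerDerivation B x y a) := by
    rw [← lie_skew, hB.isBilinDerivation_innerDerivation h2 x y a]
  have hL : ⁅B a, B (B x y)⁆ = innerDerivation B a (B x y) - B (B a (B x y)) :=
    (add_sub_cancel_right _ _).symm
  have hDa : innerDerivation B x y a = -B a (B x y) - B (B a x) y - B x (B a y) := by
    rw [innerDerivation_apply, Ring.lie_def, LinearMap.add_apply, LinearMap.sub_apply,
      Module.End.mul_apply, Module.End.mul_apply, hB.skew y a, hB.skew x a, hB.skew (B x y) a,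
      hB.skew (B a x) y, map_neg, map_neg]
    abel
  simp only [loosBracket_eq_add, lie_add, hD, hL, hDa, hB.innerDerivation_bracket h2 a x y,
    map_sub, map_neg]
  abel

theorem isTripleDerivation_loosBracket (hB : IsMaltsev B) (h2 : IsSMulRegular M (2 : ℕ)) (x y : M) :
    IsTripleDerivation (loosBracket B) (loosBracket B x y) :=
  (hB.isBilinDerivation_innerDerivation h2 x y).isTripleDerivation_loosBracket.add
    (hB.isTripleDerivation_left h2 (B x y))

end IsMaltsev

theorem loos_derivation_identity_general {R M : Type*} [CommRing R] [AddCommGroup M] [Module R M]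
    {B : M →ₗ[R] Module.End R M} (hB : IsMaltsev B) (h2 : IsSMulRegular M (2 : ℕ)) (x y z w v : M) :
    loosBracket B x y (loosBracket B z w v) =
      loosBracket B (loosBracket B x y z) w v + loosBracket B z (loosBracket B x y w) v +
        loosBracket B z w (loosBracket B x y v) :=
  (hB.isTripleDerivation_loosBracket h2 x y).apply z w v

/-- For a Mal'tsev algebra `M` over a field of characteristic zero,
the Loos bracket `{x,y,z} = [x,[y,z]] - [y,[x,z]] + 2[[x,y],z]` satisfies the
derivation identity of a Lie triple system. -/
theorem loos_derivation_identity
    (k : Type*) [Field k] [CharZero k] (M : Type*) [AddCommGroup M] [Module k M]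
    (B : M →ₗ[k] M →ₗ[k] M)
    (halt : ∀ x : M, B x x = 0)
    (hmal : ∀ x y z : M,
      B (B x y) (B x z) =
        B (B (B x y) z) x + B (B (B y z) x) x + B (B (B z x) x) y)
    (loos : M → M → M → M)
    (hloos : ∀ x y z : M, loos x y z = B x (B y z) - B y (B x z) + 2 • B (B x y) z) :
    ∀ x y z w v : M,
      loos x y (loos z w v) =
        loos (loos x y z) w v + loos z (loos x y w) v + loos z w (loos x y v) := by
  have : IsAddTorsionFree M := .of_isTorsionFree k M
  simpa only [loosBracket_apply, ← hloos] using
    loos_derivation_identity_general (B := B) ⟨halt, hmal⟩ (nsmul_right_injective two_ne_zero)
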